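/- Let 1 ≤ i ≤ n. For 0 ≤ p ≤ i with i ≡ p (mod 2), set T_{i,p} = T_i ⋆ Γ_{i−2} ⋆ Γ_{i−4} ⋆ ⋯ ⋆ Γ_p and S_{i,p−1} = (c_i a_i) ⋆ Γ_{i−1} ⋆ Γ_{i−3} ⋆ ⋯ ⋆ Γ_{p−1}, where T_i is the 2×1 column matrix with entries b_i and c_{i−1}. Then the eventually periodic complex of finitely generated free left B-modules ⋯ → F₃ → F₂ → F₁ = B² → B b_i + B c_{i−1} → 0, whose augmentation is (w, x) ↦ w b_i + x c_{i−1} and whose differentials, reading from the augmentation leftward, are right multiplication successively by S_{i,i−1}, T_{i,i−2}, S_{i,i−3}, T_{i,i−4}, …, and which thereafter continues 2-periodically with the pair (T_{i,0}, S_{i,1}) repeated when i is even and with the pair (S_{i,0}, T_{i,1}) repeated when i is odd (the ranks of the free modules F_j being dictated by the sizes of these matrices), is exact; i.e., it is a free resolution of the left ideal B b_i + B c_{i−1} of B. -/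

import Mathlib

noncomputable section

inductive Gen (n : ℕ) : Type
  | a : Fin (n+1) → Gen n
  | b : Fin (n+1) → Gen n
  | c : Fin (n+1) → Gen n

variable (K : Type) [Field K] (n : ℕ)

/-- The tensor algebra `T(V)` on the span of the generators, i.e. the free algebra. -/
abbrev FA := FreeAlgebra K (Gen n)

/-- `a_i`, with the convention that out-of-range indices give `0`. -/
def ga (i : ℤ) : FA K n :=
  if h : 0 ≤ i ∧ i ≤ (n : ℤ) then FreeAlgebra.ι K (Gen.a ⟨i.toNat, by omega⟩) else 0

def gb (i : ℤ) : FA K n :=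
  if h : 0 ≤ i ∧ i ≤ (n : ℤ) then FreeAlgebra.ι K (Gen.b ⟨i.toNat, by omega⟩) else 0

def gc (i : ℤ) : FA K n :=
  if h : 0 ≤ i ∧ i ≤ (n : ℤ) then FreeAlgebra.ι K (Gen.c ⟨i.toNat, by omega⟩) else 0

/-- The set `R` of defining relations. -/
def rels : Set (FA K n) :=
  { x | x = ga K n n * gb K n n * gc K n n ∨ x = gc K n 0 * ga K n 0 ∨
      ∃ i : ℕ, i < n ∧
        (x = ga K n i * gb K n i * gc K n i + gc K n (i+1) * ga K n (i+1) * gb K n (i+1) ∨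
         x = gb K n (i+1) * gc K n (i+1) * ga K n (i+1) ∨
         x = gc K n i * gc K n (i+1) ∨
         x = gb K n (i+1) * ga K n i) }

/-- The relation whose ring-quotient is `B = T(V)/⟨R⟩`. -/
def BRel (x y : FA K n) : Prop := x ∈ rels K n ∧ y = 0

/-- The algebra `B = T(V)/⟨R⟩`. -/
abbrev B := RingQuot (BRel K n)

/-- The quotient map `π_B : T(V) → B`. -/
def πB : FA K n →ₐ[K] B K n := RingQuot.mkAlgHom K (BRel K n)

/-- The image of `a_i` in `B` (zero for out-of-range indices). -/
def aB (i : ℤ) : B K n := πB K n (ga K n i)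
def bB (i : ℤ) : B K n := πB K n (gb K n i)
def cB (i : ℤ) : B K n := πB K n (gc K n i)

/-- The left annihilator of `x`, as a left ideal of `B`. -/
def lann (x : B K n) : Ideal (B K n) where
  carrier := {w | w * x = 0}
  add_mem' := by
    intro a b ha hb
    simp only [Set.mem_setOf_eq, add_mul] at *
    rw [ha, hb, add_zero]
  zero_mem' := by simp
  smul_mem' := by
    intro c w hw
    simp only [Set.mem_setOf_eq, smul_eq_mul, mul_assoc] at *
    rw [hw, mul_zero]

end

/-- The star product `M ⋆ N` of an `a×b` matrix and a `c×d` matrix: the `(a+c-1)×(b+d)`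
matrix with `M` in the top-left `a×b` corner, `N` occupying rows `a,…,a+c-1` and columns
`b+1,…,b+d`, and zeros elsewhere. -/
def starM {R : Type} [Semiring R] {a b c d : ℕ}
    (M : Matrix (Fin a) (Fin b) R) (N : Matrix (Fin c) (Fin d) R) :
    Matrix (Fin (a + c - 1)) (Fin (b + d)) R :=
  Matrix.of fun i j =>
    if hij : i.val < a ∧ j.val < b then M ⟨i.val, hij.1⟩ ⟨j.val, hij.2⟩
    else if hij' : a - 1 ≤ i.val ∧ b ≤ j.val then
      N ⟨i.val - (a - 1), by have := i.isLt; omega⟩ ⟨j.val - b, by have := j.isLt; omega⟩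
    else 0

/-- The column matrix `Γ_i` for `i ≥ 1`, with entries `a_i b_i` and `c_{i-1}`. -/
def GammaP (K : Type) [Field K] (n : ℕ) (i : ℤ) : Matrix (Fin 2) (Fin 1) (B K n) :=
  !![aB K n i * bB K n i; cB K n (i - 1)]

/-- A matrix over `R` bundled with its dimensions. -/
structure MatB (R : Type) [Semiring R] where
  rows : ℕ
  cols : ℕ
  M : Matrix (Fin rows) (Fin cols) R

/-- Star product of bundled matrices. -/
def MatB.star {R : Type} [Semiring R] (P Q : MatB R) : MatB R :=
  ⟨P.rows + Q.rows - 1, P.cols + Q.cols, starM P.M Q.M⟩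

/-- The bundled matrix `Γ_i` (this is `Γ_0 = (a_0 b_0)` when `i = 0`, and the `2×1` column
with entries `a_i b_i`, `c_{i-1}` when `i ≥ 1`). -/
def GammaMat (K : Type) [Field K] (n : ℕ) (i : ℤ) : MatB (B K n) :=
  if i = 0 then ⟨1, 1, !![aB K n 0 * bB K n 0]⟩
  else ⟨2, 1, GammaP K n i⟩

/-- `P ⋆ Γ_i`, with the convention that `P ⋆ Γ_i = P` for `i < 0`. -/
def starGamma (K : Type) [Field K] (n : ℕ) (P : MatB (B K n)) (i : ℤ) : MatB (B K n) :=
  if i < 0 then P else P.star (GammaMat K n i)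

/-- `R_p = Γ_n ⋆ Γ_{n−2} ⋆ ⋯ ⋆ Γ_p` (for `0 ≤ p ≤ n` with `n ≡ p (mod 2)`). -/
def Rmat (K : Type) [Field K] (n : ℕ) (p : ℕ) : MatB (B K n) :=
  (((List.range ((n - p) / 2)).map fun t => (n : ℤ) - 2 * (t + 1))).foldl
    (starGamma K n) (GammaMat K n n)

/-- `U_{p−1} = (c_n) ⋆ Γ_{n−1} ⋆ Γ_{n−3} ⋆ ⋯ ⋆ Γ_{p−1}` (this def takes `p` as argument). -/
def Umat (K : Type) [Field K] (n : ℕ) (p : ℕ) : MatB (B K n) :=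
  (((List.range ((n - p) / 2 + 1)).map fun t => (n : ℤ) - 1 - 2 * t)).foldl
    (starGamma K n) ⟨1, 1, !![cB K n n]⟩

/-- `T_{i,p} = T_i ⋆ Γ_{i−2} ⋆ Γ_{i−4} ⋆ ⋯ ⋆ Γ_p`, where `T_i` is the `2×1` column with
entries `b_i` and `c_{i−1}`. -/
def Tmat (K : Type) [Field K] (n : ℕ) (i : ℕ) (p : ℕ) : MatB (B K n) :=
  (((List.range ((i - p) / 2)).map fun t => (i : ℤ) - 2 * (t + 1))).foldl
    (starGamma K n) ⟨2, 1, !![bB K n i; cB K n ((i : ℤ) - 1)]⟩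

/-- `S_{i,p−1} = (c_i a_i) ⋆ Γ_{i−1} ⋆ Γ_{i−3} ⋆ ⋯ ⋆ Γ_{p−1}` (this def takes `p`). -/
def Smat (K : Type) [Field K] (n : ℕ) (i : ℕ) (p : ℕ) : MatB (B K n) :=
  (((List.range ((i - p) / 2 + 1)).map fun t => (i : ℤ) - 1 - 2 * t)).foldl
    (starGamma K n) ⟨1, 1, !![cB K n i * aB K n i]⟩

/-- The sequence of differentials of the complex of Lemma 3.7 resolving `B b_i + B c_{i−1}`:
`DQ i j` is the `(j+1)`-st differential (so `DQ i 0 : F₂ → F₁`), namely right multiplication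
successively by `S_{i,i−1}, T_{i,i−2}, S_{i,i−3}, …`, continuing `2`-periodically with the
pair `(T_{i,0}, S_{i,1})` when `i` is even and `(S_{i,0}, T_{i,1})` when `i` is odd. -/
def DQ (K : Type) [Field K] (n : ℕ) (i : ℕ) (j : ℕ) : MatB (B K n) :=
  if j < i then (if j % 2 = 0 then Smat K n i (i - j) else Tmat K n i (i - j - 1))
  else (if j % 2 = 0 then Smat K n i (2 - i % 2) else Tmat K n i (i % 2))

/-!
All matrices of the complex are truncations of a single operator on sequences,
`V ↦ (V₁β₀, V₀α₀ + V₂β₁, V₁α₁ + V₃β₂, …)` with `α = (b_i, a_{i-1}b_{i-1}, a_{i-2}b_{i-2}, …)` and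
`β = (c_i a_i, c_{i-1}, c_{i-2}, …)`. The relations of `B` say that it squares to zero. Solving for
a preimage degree by degree, its exactness reduces to three statements about annihilators in `B`:
`x c_k = 0` forces `x ∈ B c_{k-1}`, `x b_i + y c_k = 0` forces `x ∈ B c_i a_i`, and
`x c_i a_i = 0` forces `x ∈ B b_i + B c_{i-1}`. These are read off the basis of `B` consisting of
the words that avoid the leading words of the relations; linear independence comes from letting `B`
act by right multiplication on the free module on these words. Since `c_{-1} = 0`, the degrees of
the truncations stop growing at `i + 1`, and the complex becomes periodic.
-/

section Zigzag

/-- The differential behind every matrix of the resolution: on sequences `V` of elements of `R`,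
`V ↦ (V₁β₀, V₀α₀ + V₂β₁, V₁α₁ + V₃β₂, …)`, so that `α` raises and `β` lowers the degree by one. -/
def zigzag {R : Type*} [Semiring R] (α β V : ℕ → R) : ℕ → R
  | 0 => V 1 * β 0
  | t + 1 => V t * α t + V (t + 2) * β (t + 1)

variable {R : Type*} [Ring R] {α β U V : ℕ → R} {m N t : ℕ}

/-- The relations on the coefficients that make `zigzag α β` square to zero. -/
structure ZigzagRelations (α β : ℕ → R) : Prop where
  raise_raise (t : ℕ) : α t * α (t + 1) = 0
  lower_lower (t : ℕ) : β (t + 1) * β t = 0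
  raise_lower_zero : α 0 * β 0 = 0
  anticomm (t : ℕ) : β t * α t + α (t + 1) * β (t + 1) = 0

/-- The annihilator conditions on the coefficients that make `zigzag α β` exact in degrees at
most `m`. -/
structure ZigzagExact (α β : ℕ → R) (m : ℕ) : Prop where
  of_raise_zero_add {x y : R} : x * α 0 + y * β 1 = 0 → ∃ z, x = z * β 0
  of_lower_zero {x : R} : x * β 0 = 0 → ∃ y z, x = y * α 0 + z * β 1
  of_lower_succ {x : R} {t : ℕ} : t < m → x * β (t + 1) = 0 → ∃ z, x = z * β (t + 2)

theorem zigzag_zigzag (h : ZigzagRelations α β) (V : ℕ → R) (t : ℕ) :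
    zigzag α β (zigzag α β V) t = 0 := by
  rcases t with _ | _ | t
  · simp only [zigzag, add_mul, mul_assoc, h.raise_lower_zero, h.lower_lower 0, mul_zero, add_zero]
  · have middle : V 1 * (β 0 * α 0) + V 1 * (α 1 * β 1) = 0 := by
      rw [← mul_add, h.anticomm 0, mul_zero]
    simp only [zigzag, add_mul, mul_assoc, h.lower_lower 1, mul_zero, add_zero, middle]
  · have middle :
        V (t + 2) * (β (t + 1) * α (t + 1)) + V (t + 2) * (α (t + 2) * β (t + 2)) = 0 := by
      rw [← mul_add, h.anticomm (t + 1), mul_zero]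
    simp only [zigzag, add_mul, mul_assoc, h.raise_raise t, h.lower_lower (t + 2), mul_zero,
      add_zero, zero_add, middle]

theorem zigzag_mul_raise (h : ZigzagRelations α β) (U : ℕ → R) (t : ℕ) :
    zigzag α β U t * α t = -(U (t + 1) * α (t + 1) * β (t + 1)) := by
  have flip : β t * α t = -(α (t + 1) * β (t + 1)) := eq_neg_of_add_eq_zero_left (h.anticomm t)
  rcases t with _ | t
  · simp only [zigzag, mul_assoc, flip, mul_neg]
  · simp only [zigzag, add_mul, mul_assoc, h.raise_raise, flip, mul_neg, mul_zero, zero_add]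

theorem zigzag_eq_zero_of_neighbours (hpred : ∀ s, s + 1 = t → V s = 0) (hsucc : V (t + 1) = 0) :
    zigzag α β V t = 0 := by
  rcases t with _ | t
  · simp only [zigzag, hsucc, zero_mul]
  · simp only [zigzag, hpred t rfl, hsucc, zero_mul, add_zero]

theorem zigzag_update_of_lt {s : ℕ} (hs : t + 1 < s) (y : R) :
    zigzag α β (Function.update U s y) t = zigzag α β U t := by
  rcases t with _ | t
  · simp only [zigzag, Function.update_of_ne (by omega : 1 ≠ s)]
  · simp only [zigzag, Function.update_of_ne (by omega : t ≠ s),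
      Function.update_of_ne (by omega : t + 2 ≠ s)]

theorem exists_zigzag_eq_extend (hrel : ZigzagRelations α β) (hex : ZigzagExact α β m)
    (htm : t < m) (hV : zigzag α β V (t + 1) = 0) (hU : ∀ s ≤ t + 1, V s = zigzag α β U s) :
    ∃ U', ∀ s ≤ t + 2, V s = zigzag α β U' s := by
  have hkill : (V (t + 2) - U (t + 1) * α (t + 1)) * β (t + 1) = 0 := by
    rw [zigzag, hU t (by omega), zigzag_mul_raise hrel] at hV
    rw [sub_mul, sub_eq_neg_add, hV]
  obtain ⟨y, hy⟩ := hex.of_lower_succ htm hkill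
  refine ⟨Function.update U (t + 3) y, fun s hs => ?_⟩
  obtain hlt | rfl : s < t + 2 ∨ s = t + 2 := by omega
  · rw [zigzag_update_of_lt (by omega), hU s (by omega)]
  · rw [zigzag, Function.update_self, Function.update_of_ne (by omega), ← hy, add_sub_cancel]

theorem exists_zigzag_eq_of_le_two (hrel : ZigzagRelations α β) (hex : ZigzagExact α β m)
    (hm : 0 < m) (hV₀ : zigzag α β V 0 = 0) (hV₁ : zigzag α β V 1 = 0) :
    ∃ U, ∀ s ≤ 2, V s = zigzag α β U s := by
  obtain ⟨z, hz⟩ := hex.of_raise_zero_add hV₁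
  obtain ⟨u, y, hu⟩ := hex.of_lower_zero hV₀
  refine exists_zigzag_eq_extend (U := fun s => if s = 0 then u else if s = 1 then z else y)
    hrel hex hm hV₁ fun s hs => ?_
  obtain rfl | rfl : s = 0 ∨ s = 1 := by omega
  · simpa [zigzag] using hz
  · simpa [zigzag] using hu

theorem exists_zigzag_eq (hrel : ZigzagRelations α β) (hex : ZigzagExact α β m)
    (hN : 1 ≤ N) (hNm : N ≤ m) (hV : ∀ t ≤ N, zigzag α β V t = 0) :
    ∃ U, ∀ t ≤ N + 1, V t = zigzag α β U t := by
  induction N, hN using Nat.le_induction with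
  | base => exact exists_zigzag_eq_of_le_two hrel hex hNm (hV 0 zero_le_one) (hV 1 le_rfl)
  | succ N _ ih =>
    obtain ⟨U, hU⟩ := ih (by omega) fun t ht => hV t (by omega)
    exact exists_zigzag_eq_extend hrel hex hNm (hV (N + 1) le_rfl) hU

end Zigzag

section Matrices

variable {R : Type} [Semiring R]

theorem vecMul_starM_castAdd {a b c d : ℕ} (M : Matrix (Fin a) (Fin b) R)
    (N : Matrix (Fin c) (Fin d) R) (hc : 1 ≤ c) (u : Fin (a + c - 1) → R) (j : Fin b) :
    Matrix.vecMul u (starM M N) (Fin.castAdd d j) =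
      Matrix.vecMul (fun r : Fin a => u ⟨r, by omega⟩) M j := by
  refine (Fintype.sum_of_injective (fun r : Fin a => (⟨r, by omega⟩ : Fin (a + c - 1)))
    (fun r s hrs => by simpa [Fin.ext_iff] using hrs) _ _ (fun s hs => ?_) fun r => ?_).symm
  · have hs : ¬ (s : ℕ) < a := fun hlt => hs ⟨⟨s, hlt⟩, rfl⟩
    simp [starM, hs]
  · simp [starM]

theorem vecMul_starM_natAdd {a b c d : ℕ} (M : Matrix (Fin a) (Fin b) R)
    (N : Matrix (Fin c) (Fin d) R) (ha : 1 ≤ a) (u : Fin (a + c - 1) → R) (j : Fin d) :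
    Matrix.vecMul u (starM M N) (Fin.natAdd b j) =
      Matrix.vecMul (fun r : Fin c => u ⟨a - 1 + r, by omega⟩) N j := by
  refine (Fintype.sum_of_injective (fun r : Fin c => (⟨a - 1 + r, by omega⟩ : Fin (a + c - 1)))
    (fun r s hrs => by simpa [Fin.ext_iff] using hrs) _ _ (fun s hs => ?_) fun r => ?_).symm
  · have hs : ¬ a - 1 ≤ (s : ℕ) := fun hle =>
      hs ⟨⟨s - (a - 1), by omega⟩, Fin.ext (Nat.add_sub_cancel' hle)⟩
    simp only [starM, Matrix.of_apply]
    rw [dif_neg (by simp), dif_neg (by omega), mul_zero]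
  · simp only [starM, Matrix.of_apply]
    rw [dif_neg (by simp), dif_pos (by simp)]
    simp

/-- `P` is the matrix of the operator `F` on sequences, where the rows and columns of `P` sit in
the degrees given by `row` and `col`. -/
def MatB.Represents (P : MatB R) (F : (ℕ → R) → ℕ → R) (row col : ℕ → ℕ) : Prop :=
  ∀ (V : ℕ → R) (c : Fin P.cols),
    Matrix.vecMul (fun r : Fin P.rows => V (row r)) P.M c = F V (col c)

theorem MatB.Represents.star {P Q : MatB R} {F : (ℕ → R) → ℕ → R} {row col : ℕ → ℕ}
    (hP : P.Represents F row col)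
    (hQ : Q.Represents F (fun r => row (P.rows - 1 + r)) (fun c => col (P.cols + c)))
    (hProws : 1 ≤ P.rows) (hQrows : 1 ≤ Q.rows) : (P.star Q).Represents F row col := by
  intro V c
  induction c using Fin.addCases with
  | left c => exact (vecMul_starM_castAdd P.M Q.M hQrows _ c).trans (hP V c)
  | right c => exact (vecMul_starM_natAdd P.M Q.M hProws _ c).trans (hQ V c)

end Matrices

section Truncations

/-- The top degree of the domain of the degree-`N` truncation of a zigzag whose lowering
coefficient `β (m + 1)` vanishes: one more than `N`, unless this exceeds `m + 1`. -/
def nextDegree (m N : ℕ) : ℕ := if N ≤ m then N + 1 else m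

/-- `P` is the matrix of `zigzag α β` from the degrees `≡ N + 1 (mod 2)` up to `nextDegree m N` to
the degrees `≡ N (mod 2)` up to `N`. -/
structure IsZigzagTruncation {R : Type} [Semiring R] (α β : ℕ → R) (m : ℕ) (P : MatB R) (N : ℕ) :
    Prop where
  cols : P.cols = N / 2 + 1
  rows : P.rows = nextDegree m N / 2 + 1
  represents : P.Represents (zigzag α β) (fun r => (N + 1) % 2 + 2 * r) (fun c => N % 2 + 2 * c)

theorem nextDegree_mod_two {m N : ℕ} (hN : N ≤ m + 1) : nextDegree m N % 2 = (N + 1) % 2 := by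
  unfold nextDegree
  split_ifs <;> omega

/-- The sequence with the entries of `v` in the degrees `p, p + 2, p + 4, …` and zeros elsewhere. -/
noncomputable def spread {R : Type} [Zero R] (p : ℕ) {k : ℕ} (v : Fin k → R) : ℕ → R :=
  Function.extend (fun r : Fin k => p + 2 * (r : ℕ)) v 0

theorem spread_apply {R : Type} [Zero R] (p : ℕ) {k : ℕ} (v : Fin k → R) (r : Fin k) :
    spread p v (p + 2 * (r : ℕ)) = v r := by
  have hinj : Function.Injective fun r : Fin k => p + 2 * (r : ℕ) :=
    fun r s hrs => by simpa [Fin.ext_iff] using hrs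
  exact hinj.extend_apply v 0 r

theorem spread_eq_zero {R : Type} [Zero R] {p k t : ℕ} (v : Fin k → R) (ht : t % 2 ≠ p % 2) :
    spread p v t = 0 := by
  refine Function.extend_apply' (f := fun r : Fin k => p + 2 * (r : ℕ)) v 0 t ?_
  rintro ⟨r, rfl⟩
  exact ht (Nat.add_mul_mod_self_left p 2 r)

namespace IsZigzagTruncation

theorem star {R : Type} [Semiring R] {α β : ℕ → R} {m N : ℕ} {P Q : MatB R}
    (hP : IsZigzagTruncation α β m P N) (hN : N + 1 ≤ m) (hQcols : Q.cols = 1)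
    (hQrows : Q.rows = if N + 1 = m then 1 else 2)
    (hQ : Q.Represents (zigzag α β) (fun r => N + 1 + 2 * r) (fun c => N + 2 + 2 * c)) :
    IsZigzagTruncation α β m (P.star Q) (N + 2) := by
  have hProws : P.rows = (N + 1) / 2 + 1 := by rw [hP.rows, nextDegree, if_pos (by omega)]
  have hQrows_pos : 1 ≤ Q.rows := by rw [hQrows]; split_ifs <;> omega
  refine ⟨?_, ?_, ?_⟩
  · simp only [MatB.star, hP.cols, hQcols]
    omega
  · simp only [MatB.star, hProws, hQrows, nextDegree]
    split_ifs <;> omega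
  · have hrow : (N + 2 + 1) % 2 = (N + 1) % 2 := by omega
    rw [hrow, Nat.add_mod_right]
    refine hP.represents.star ?_ (by omega) hQrows_pos
    convert hQ using 2 with r c
    · rw [hProws]
      omega
    · rw [hP.cols]
      omega

variable {R : Type} [Ring R] {α β : ℕ → R} {m N : ℕ} {P Q : MatB R}

theorem vecMul_vecMul_eq_zero (hrel : ZigzagRelations α β) (hN : N ≤ m + 1)
    (hP : IsZigzagTruncation α β m P N) (hQ : IsZigzagTruncation α β m Q (nextDegree m N))
    (h : Q.cols = P.rows) (w : Fin Q.rows → R) :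
    Matrix.vecMul (Matrix.vecMul w Q.M ∘ Fin.cast h.symm) P.M = 0 := by
  obtain ⟨W, rfl⟩ : ∃ W : ℕ → R,
      w = fun r : Fin Q.rows => W ((nextDegree m N + 1) % 2 + 2 * (r : ℕ)) :=
    ⟨spread _ w, funext fun r => (spread_apply _ w r).symm⟩
  have himage :
      Matrix.vecMul (fun r : Fin Q.rows => W ((nextDegree m N + 1) % 2 + 2 * (r : ℕ))) Q.M ∘
        Fin.cast h.symm = fun r : Fin P.rows => zigzag α β W ((N + 1) % 2 + 2 * (r : ℕ)) :=
    funext fun r => by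
      rw [Function.comp_apply, hQ.represents, nextDegree_mod_two hN, Fin.val_cast]
  ext c
  rw [himage, hP.represents, zigzag_zigzag hrel, Pi.zero_apply]

theorem zigzag_spread_eq_zero (hP : IsZigzagTruncation α β m P N) {v : Fin P.rows → R}
    (hv : Matrix.vecMul v P.M = 0) {t : ℕ} (ht : t ≤ N) :
    zigzag α β (spread ((N + 1) % 2) v) t = 0 := by
  obtain hsame | hother : t % 2 = N % 2 ∨ t % 2 ≠ N % 2 := em _
  · have hc : t / 2 < P.cols := by rw [hP.cols]; omega
    have ht : t = N % 2 + 2 * (t / 2) := by omega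
    have hcolumn := hP.represents (spread ((N + 1) % 2) v) ⟨t / 2, hc⟩
    simp only [spread_apply, hv, ← ht] at hcolumn
    exact hcolumn.symm
  · exact zigzag_eq_zero_of_neighbours (fun s hs => spread_eq_zero v (by omega))
      (spread_eq_zero v (by omega))

theorem vecMul_eq_zero_iff (hrel : ZigzagRelations α β) (hex : ZigzagExact α β m) (hm : 1 ≤ m)
    (hN : 1 ≤ N) (hNm : N ≤ m + 1) (hP : IsZigzagTruncation α β m P N)
    (hQ : IsZigzagTruncation α β m Q (nextDegree m N)) (h : Q.cols = P.rows)
    (v : Fin Q.cols → R) :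
    Matrix.vecMul (v ∘ Fin.cast h.symm) P.M = 0 ↔ ∃ w, v = Matrix.vecMul w Q.M := by
  refine ⟨fun hv => ?_, ?_⟩
  · obtain ⟨U, hU⟩ := exists_zigzag_eq hrel hex (N := min N m) (by omega) (by omega)
      fun t ht => hP.zigzag_spread_eq_zero hv (by omega)
    refine ⟨fun r => U ((nextDegree m N + 1) % 2 + 2 * r), funext fun c => ?_⟩
    have hdeg : (N + 1) % 2 + 2 * (c : ℕ) ≤ min N m + 1 := by
      have hc := c.isLt
      simp only [hQ.cols, nextDegree] at hc
      split_ifs at hc <;> omega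
    rw [hQ.represents, nextDegree_mod_two hNm, ← hU _ hdeg]
    exact (spread_apply _ (v ∘ Fin.cast h.symm) (Fin.cast h c)).symm
  · rintro ⟨w, rfl⟩
    exact vecMul_vecMul_eq_zero hrel hNm hP hQ h w

end IsZigzagTruncation

end Truncations

section Relations

variable {K : Type} [Field K] {n : ℕ}

theorem πB_eq_zero {x : FA K n} (hx : x ∈ rels K n) : πB K n x = 0 :=
  (RingQuot.mkAlgHom_rel K (show BRel K n x 0 from ⟨hx, rfl⟩)).trans (map_zero _)

theorem aB_eq_zero {k : ℤ} (hk : k < 0 ∨ (n : ℤ) < k) : aB K n k = 0 := by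
  rw [aB, ga, dif_neg (by omega), map_zero]

theorem bB_eq_zero {k : ℤ} (hk : k < 0 ∨ (n : ℤ) < k) : bB K n k = 0 := by
  rw [bB, gb, dif_neg (by omega), map_zero]

theorem cB_eq_zero {k : ℤ} (hk : k < 0 ∨ (n : ℤ) < k) : cB K n k = 0 := by
  rw [cB, gc, dif_neg (by omega), map_zero]

theorem lt_zero_or_exists_nat_lt_or_le (n : ℕ) (k : ℤ) :
    k < 0 ∨ (∃ j : ℕ, k = j ∧ j < n) ∨ (n : ℤ) ≤ k := by
  by_cases hk : 0 ≤ k ∧ k < n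
  · exact .inr (.inl ⟨k.toNat, by omega, by omega⟩)
  · omega

theorem cB_mul_cB (k : ℤ) : cB K n k * cB K n (k + 1) = 0 := by
  obtain hneg | ⟨j, rfl, hj⟩ | hge := lt_zero_or_exists_nat_lt_or_le n k
  · rw [cB_eq_zero (.inl hneg), zero_mul]
  · simpa only [cB, map_mul] using πB_eq_zero (K := K) (.inr (.inr ⟨j, hj, .inr (.inr (.inl rfl))⟩))
  · rw [cB_eq_zero (by omega : k + 1 < 0 ∨ _), mul_zero]

theorem bB_mul_aB (k : ℤ) : bB K n (k + 1) * aB K n k = 0 := by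
  obtain hneg | ⟨j, rfl, hj⟩ | hge := lt_zero_or_exists_nat_lt_or_le n k
  · rw [aB_eq_zero (.inl hneg), mul_zero]
  · simpa only [aB, bB, map_mul] using
      πB_eq_zero (K := K) (.inr (.inr ⟨j, hj, .inr (.inr (.inr rfl))⟩))
  · rw [bB_eq_zero (by omega), zero_mul]

theorem cB_zero_mul_aB_zero : cB K n 0 * aB K n 0 = 0 := by
  simpa only [aB, cB, map_mul] using πB_eq_zero (K := K) (n := n) (.inr (.inl rfl))

theorem bB_mul_cB_mul_aB (k : ℤ) : bB K n k * cB K n k * aB K n k = 0 := by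
  obtain ⟨k, rfl⟩ : ∃ l, k = l + 1 := ⟨k - 1, by ring⟩
  obtain hneg | ⟨j, rfl, hj⟩ | hge := lt_zero_or_exists_nat_lt_or_le n k
  · obtain rfl | hlt : k = -1 ∨ k + 1 < 0 := by omega
    · rw [neg_add_cancel, mul_assoc, cB_zero_mul_aB_zero, mul_zero]
    · rw [aB_eq_zero (.inl hlt), mul_zero]
  · simpa only [aB, bB, cB, map_mul] using
      πB_eq_zero (K := K) (.inr (.inr ⟨j, hj, .inr (.inl rfl)⟩))
  · rw [aB_eq_zero (by omega), mul_zero]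

theorem aB_mul_bB_mul_cB_last : aB K n n * bB K n n * cB K n n = 0 := by
  simpa only [aB, bB, cB, map_mul] using πB_eq_zero (K := K) (n := n) (.inl rfl)

theorem abc_add_cab_eq_zero (k : ℤ) :
    aB K n k * bB K n k * cB K n k + cB K n (k + 1) * aB K n (k + 1) * bB K n (k + 1) = 0 := by
  obtain hneg | ⟨j, rfl, hj⟩ | hge := lt_zero_or_exists_nat_lt_or_le n k
  · obtain rfl | hlt : k = -1 ∨ k + 1 < 0 := by omega
    · rw [neg_add_cancel, cB_zero_mul_aB_zero, cB_eq_zero (.inl hneg), mul_zero, zero_mul, add_zero]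
    · rw [cB_eq_zero (.inl hneg), cB_eq_zero (.inl hlt), mul_zero, zero_mul, zero_mul, add_zero]
  · simpa only [aB, bB, cB, map_mul, map_add] using
      πB_eq_zero (K := K) (.inr (.inr ⟨j, hj, .inl rfl⟩))
  · rw [cB_eq_zero (by omega : k + 1 < 0 ∨ _), zero_mul, zero_mul, add_zero]
    obtain rfl | hlt : k = n ∨ (n : ℤ) < k := by omega
    · exact aB_mul_bB_mul_cB_last
    · rw [cB_eq_zero (.inr hlt), mul_zero]

end Relations

section NormalWords

open Finsupp

/-- The words whose last letters form the leading word of one of the relations of `B`, where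
`c_{i+1} a_{i+1} b_{i+1}` is the leading word of `a_i b_i c_i + c_{i+1} a_{i+1} b_{i+1}`.
Words are stored reversed, the last letter being the head of the list. -/
inductive HeadReducible {n : ℕ} : List (Gen n) → Prop
  | ca_zero (v : List (Gen n)) : HeadReducible (.a 0 :: .c 0 :: v)
  | bca (i : Fin (n + 1)) (v : List (Gen n)) : HeadReducible (.a i :: .c i :: .b i :: v)
  | ba (j : Fin n) (v : List (Gen n)) : HeadReducible (.a j.castSucc :: .b j.succ :: v)
  | cab (i : Fin (n + 1)) (v : List (Gen n)) : HeadReducible (.b i :: .a i :: .c i :: v)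
  | abc_last (v : List (Gen n)) :
      HeadReducible (.c (Fin.last n) :: .b (Fin.last n) :: .a (Fin.last n) :: v)
  | cc (j : Fin n) (v : List (Gen n)) : HeadReducible (.c j.succ :: .c j.castSucc :: v)

/-- The (reversed) words without a leading word of a relation as a factor. -/
def IsNormal {n : ℕ} : List (Gen n) → Prop
  | [] => True
  | x :: w => ¬HeadReducible (x :: w) ∧ IsNormal w

/-- The normal words, which index the basis of normal forms of `B`. -/
abbrev NormalWord (n : ℕ) : Type := {w : List (Gen n) // IsNormal w}

section Normality

variable {n : ℕ}

theorem normal_a_c_succ_iff (j : Fin n) (v : List (Gen n)) :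
    IsNormal (.a j.succ :: .c j.succ :: v) ↔
      IsNormal v ∧ (∀ u, v ≠ .b j.succ :: u) ∧ ∀ u, v ≠ .c j.castSucc :: u := by
  refine ⟨fun ⟨ha, hc, hv⟩ => ⟨hv, ?_, ?_⟩, fun ⟨hv, hb, hc⟩ => ⟨?_, ?_, hv⟩⟩
  · rintro u rfl
    exact ha (.bca _ u)
  · rintro u rfl
    exact hc (.cc j u)
  · generalize hw : Gen.a j.succ :: Gen.c j.succ :: v = w
    rintro ⟨⟩ <;> simp_all
  · generalize hw : Gen.c j.succ :: v = w
    rintro ⟨⟩ <;> simp_all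

theorem normal_c_b_a_castSucc_iff (j : Fin n) (v : List (Gen n)) :
    IsNormal (.c j.castSucc :: .b j.castSucc :: .a j.castSucc :: v) ↔
      IsNormal v ∧ (∀ u, v ≠ .b j.succ :: u) ∧ ∀ u, v ≠ .c j.castSucc :: u := by
  refine ⟨fun ⟨_, hb, ha, hv⟩ => ⟨hv, ?_, ?_⟩, fun ⟨hv, hb, hc⟩ => ⟨?_, ?_, ?_, hv⟩⟩
  · rintro u rfl
    exact ha (.ba j u)
  · rintro u rfl
    exact hb (.cab _ u)
  · generalize hw : Gen.c j.castSucc :: Gen.b j.castSucc :: Gen.a j.castSucc :: v = w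
    rintro ⟨⟩ <;> simp_all [Fin.castSucc_ne_last]
  · generalize hw : Gen.b j.castSucc :: Gen.a j.castSucc :: v = w
    rintro ⟨⟩ <;> simp_all
  · generalize hw : Gen.a j.castSucc :: v = w
    rintro ⟨⟩ <;> simp_all

end Normality

variable (K : Type) [Field K] {n : ℕ}

open scoped Classical in
/-- The basis vector of a word if the word is normal, and zero otherwise. -/
noncomputable def normalSingle (w : List (Gen n)) : NormalWord n →₀ K :=
  if h : IsNormal w then single ⟨w, h⟩ 1 else 0

open scoped Classical in
/-- The normal form of the product of a normal word and a letter; a product ending in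
`c_{j+1} a_{j+1} b_{j+1}` is rewritten to end in `a_j b_j c_j`. -/
noncomputable def mulLetter : List (Gen n) → Gen n → (NormalWord n →₀ K)
  | .a j :: .c k :: v, .b i =>
    if i = j ∧ i = k then
      Fin.cases 0
        (fun l => -normalSingle K (.c l.castSucc :: .b l.castSucc :: .a l.castSucc :: v)) i
    else normalSingle K (.b i :: .a j :: .c k :: v)
  | w, x => normalSingle K (x :: w)

/-- Right multiplication by a letter in terms of normal forms. -/
noncomputable def rightMul (x : Gen n) : Module.End K (NormalWord n →₀ K) :=
  linearCombination K fun w => mulLetter K w.1 x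

theorem mulLetter_eq_normalSingle {w : List (Gen n)} {x : Gen n}
    (h : ∀ i v, x = .b i → w ≠ .a i :: .c i :: v) :
    mulLetter K w x = normalSingle K (x :: w) := by
  unfold mulLetter
  split
  · rename_i j k v i
    rw [if_neg]
    rintro ⟨rfl, rfl⟩
    exact h i v rfl rfl
  · rfl

theorem mulLetter_b_succ (j : Fin n) (v : List (Gen n)) :
    mulLetter K (.a j.succ :: .c j.succ :: v) (.b j.succ) =
      -normalSingle K (.c j.castSucc :: .b j.castSucc :: .a j.castSucc :: v) := by
  simp [mulLetter]

variable {K}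

theorem normalSingle_of_normal {w : List (Gen n)} (h : IsNormal w) :
    normalSingle K w = single ⟨w, h⟩ 1 := dif_pos h

theorem normalSingle_of_not_normal {w : List (Gen n)} (h : ¬IsNormal w) :
    normalSingle K w = 0 := dif_neg h

theorem normalSingle_cons_eq_zero {w : List (Gen n)} (x : Gen n) (h : ¬IsNormal w) :
    normalSingle K (x :: w) = 0 :=
  normalSingle_of_not_normal fun hxw : IsNormal (x :: w) => h hxw.2

theorem rightMul_normalSingle_of_normal (x : Gen n) {w : List (Gen n)} (h : IsNormal w) :
    rightMul K x (normalSingle K w) = mulLetter K w x := by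
  rw [normalSingle_of_normal h, rightMul, linearCombination_single, one_smul]

theorem rightMul_normalSingle {x : Gen n} {w : List (Gen n)}
    (h : ∀ i v, x = .b i → w ≠ .a i :: .c i :: v) :
    rightMul K x (normalSingle K w) = normalSingle K (x :: w) := by
  by_cases hw : IsNormal w
  · rw [rightMul_normalSingle_of_normal x hw, mulLetter_eq_normalSingle K h]
  · rw [normalSingle_of_not_normal hw, map_zero, normalSingle_cons_eq_zero x hw]

theorem rightMul_a_normalSingle (i : Fin (n + 1)) (w : List (Gen n)) :
    rightMul K (.a i) (normalSingle K w) = normalSingle K (.a i :: w) :=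
  rightMul_normalSingle fun _ _ h => nomatch h

theorem rightMul_c_normalSingle (i : Fin (n + 1)) (w : List (Gen n)) :
    rightMul K (.c i) (normalSingle K w) = normalSingle K (.c i :: w) :=
  rightMul_normalSingle fun _ _ h => nomatch h

theorem rightMul_b_normalSingle_a_c (j : Fin n) (v : List (Gen n)) :
    rightMul K (.b j.succ) (normalSingle K (.a j.succ :: .c j.succ :: v)) =
      -normalSingle K (.c j.castSucc :: .b j.castSucc :: .a j.castSucc :: v) := by
  by_cases hv : IsNormal (.a j.succ :: .c j.succ :: v)
  · rw [rightMul_normalSingle_of_normal _ hv, mulLetter_b_succ]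
  · rw [normalSingle_of_not_normal hv, map_zero, normalSingle_of_not_normal, neg_zero]
    rwa [normal_c_b_a_castSucc_iff, ← normal_a_c_succ_iff]

theorem HeadReducible.normalSingle_eq_zero {w : List (Gen n)} (h : HeadReducible w) :
    normalSingle K w = 0 :=
  normalSingle_of_not_normal fun hw => by cases h <;> exact hw.1 (by constructor)

theorem rightMul_c_rightMul_b_normalSingle (i : Fin (n + 1)) (w : List (Gen n)) :
    rightMul K (.c i) (rightMul K (.b i) (normalSingle K w)) =
      normalSingle K (.c i :: .b i :: w) := by
  by_cases hw : ∃ v, w = .a i :: .c i :: v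
  · obtain ⟨v, rfl⟩ := hw
    have hb : ¬IsNormal (.b i :: .a i :: .c i :: v) := fun h => h.1 (.cab i v)
    rw [normalSingle_cons_eq_zero _ hb]
    induction i using Fin.cases with
    | zero => rw [(HeadReducible.ca_zero v).normalSingle_eq_zero, map_zero, map_zero]
    | succ j =>
      rw [rightMul_b_normalSingle_a_c, map_neg, rightMul_c_normalSingle,
        (HeadReducible.cc j _).normalSingle_eq_zero, neg_zero]
  · rw [rightMul_normalSingle, rightMul_c_normalSingle]
    rintro _ v ⟨⟩ rfl
    exact hw ⟨v, rfl⟩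

theorem rightMul_a_rightMul_b_normalSingle (j : Fin n) (w : List (Gen n)) :
    rightMul K (.a j.castSucc) (rightMul K (.b j.succ) (normalSingle K w)) = 0 := by
  by_cases hw : ∃ v, w = .a j.succ :: .c j.succ :: v
  · obtain ⟨v, rfl⟩ := hw
    rw [rightMul_b_normalSingle_a_c, map_neg, rightMul_a_normalSingle,
      (HeadReducible.bca _ _).normalSingle_eq_zero, neg_zero]
  · rw [rightMul_normalSingle, rightMul_a_normalSingle, (HeadReducible.ba j w).normalSingle_eq_zero]
    rintro _ v ⟨⟩ rfl
    exact hw ⟨v, rfl⟩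

theorem end_eq_zero_of_normalSingle {f : Module.End K (NormalWord n →₀ K)}
    (h : ∀ w, f (normalSingle K w) = 0) : f = 0 :=
  Finsupp.lhom_ext' fun w => LinearMap.ext_ring <| by
    simpa [normalSingle_of_normal w.2] using h w.1

end NormalWords

section NormalForm

open Finsupp MulOpposite

variable (K : Type) [Field K] {n : ℕ}

theorem ga_val (i : Fin (n + 1)) : ga K n (i : ℕ) = FreeAlgebra.ι K (.a i) := by
  rw [ga, dif_pos (by omega)]
  rfl

theorem gb_val (i : Fin (n + 1)) : gb K n (i : ℕ) = FreeAlgebra.ι K (.b i) := by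
  rw [gb, dif_pos (by omega)]
  rfl

theorem gc_val (i : Fin (n + 1)) : gc K n (i : ℕ) = FreeAlgebra.ι K (.c i) := by
  rw [gc, dif_pos (by omega)]
  rfl

/-- The right action of the free algebra on normal forms; a right action is a homomorphism to the
opposite of the endomorphism algebra. -/
noncomputable def freeAction : FA K n →ₐ[K] (Module.End K (NormalWord n →₀ K))ᵐᵒᵖ :=
  FreeAlgebra.lift K fun x => op (rightMul K x)

variable {K}

theorem freeAction_eq_zero {x : FA K n} (hx : x ∈ rels K n) : freeAction K x = 0 := by
  have action_ι (y : Gen n) : freeAction K (FreeAlgebra.ι K y) = op (rightMul K y) :=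
    FreeAlgebra.lift_ι_apply _ _
  refine unop_injective (end_eq_zero_of_normalSingle fun w => ?_)
  obtain rfl | rfl | ⟨j, hj, hx⟩ := hx
  · have hlast : ((n : ℕ) : ℤ) = ((Fin.last n : Fin (n + 1)) : ℕ) := rfl
    simp only [hlast, ga_val, gb_val, gc_val, map_mul, action_ι, unop_mul, unop_op,
      Module.End.mul_apply, rightMul_a_normalSingle, rightMul_c_rightMul_b_normalSingle,
      (HeadReducible.abc_last w).normalSingle_eq_zero]
  · have hzero : (0 : ℤ) = ((0 : Fin (n + 1)) : ℕ) := rfl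
    simp only [hzero, ga_val, gc_val, map_mul, action_ι, unop_mul, unop_op,
      Module.End.mul_apply, rightMul_a_normalSingle, rightMul_c_normalSingle,
      (HeadReducible.ca_zero w).normalSingle_eq_zero]
  · lift j to Fin n using hj
    have hcast : ((j : ℕ) : ℤ) = (j.castSucc : ℕ) := rfl
    have hsucc : ((j : ℕ) : ℤ) + 1 = (j.succ : ℕ) := by simp
    rw [hsucc, hcast] at hx
    simp only [ga_val, gb_val, gc_val] at hx
    obtain rfl | rfl | rfl | rfl := hx <;>
      simp only [map_mul, map_add, action_ι, unop_mul, unop_add, unop_op, Module.End.mul_apply,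
        LinearMap.add_apply]
    · rw [rightMul_a_normalSingle, rightMul_c_rightMul_b_normalSingle, rightMul_c_normalSingle,
        rightMul_a_normalSingle, rightMul_b_normalSingle_a_c, add_neg_cancel]
    · rw [rightMul_c_rightMul_b_normalSingle, rightMul_a_normalSingle,
        (HeadReducible.bca _ w).normalSingle_eq_zero]
    · rw [rightMul_c_normalSingle, rightMul_c_normalSingle,
        (HeadReducible.cc j w).normalSingle_eq_zero]
    · exact rightMul_a_rightMul_b_normalSingle j w

variable (K) in
/-- The right action of `B` on normal forms. -/
noncomputable def action : B K n →ₐ[K] (Module.End K (NormalWord n →₀ K))ᵐᵒᵖ :=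
  RingQuot.liftAlgHom K ⟨freeAction K, by
    rintro x y ⟨hx, rfl⟩
    rw [freeAction_eq_zero hx, map_zero]⟩

theorem action_πB (x : FA K n) : action K (πB K n x) = freeAction K x :=
  RingQuot.liftAlgHom_mkAlgHom_apply ..

variable (K) in
/-- The image of a generator in `B`. -/
noncomputable def letter (x : Gen n) : B K n := πB K n (FreeAlgebra.ι K x)

variable (K) in
/-- The product in `B` of the letters of a (reversed) word. -/
noncomputable def wordProd : List (Gen n) → B K n
  | [] => 1
  | x :: w => wordProd w * letter K x

/-- The coordinates of an element of `B` in the basis of normal words. -/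
noncomputable def normalForm (y : B K n) : NormalWord n →₀ K :=
  unop (action K y) (single ⟨[], trivial⟩ 1)

theorem normalForm_zero : normalForm (0 : B K n) = 0 := by
  rw [normalForm, map_zero, unop_zero, LinearMap.zero_apply]

theorem normalForm_add (y z : B K n) : normalForm (y + z) = normalForm y + normalForm z := by
  rw [normalForm, map_add, unop_add, LinearMap.add_apply, normalForm, normalForm]

theorem normalForm_mul_letter (y : B K n) (x : Gen n) :
    normalForm (y * letter K x) = rightMul K x (normalForm y) := by
  rw [normalForm, map_mul, letter, action_πB, freeAction, FreeAlgebra.lift_ι_apply, unop_mul,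
    unop_op, Module.End.mul_apply, normalForm]

theorem letter_a (i : Fin (n + 1)) : letter K (.a i) = aB K n (i : ℕ) := by
  rw [letter, aB, ga_val]

theorem letter_b (i : Fin (n + 1)) : letter K (.b i) = bB K n (i : ℕ) := by
  rw [letter, bB, gb_val]

theorem letter_c (i : Fin (n + 1)) : letter K (.c i) = cB K n (i : ℕ) := by
  rw [letter, cB, gc_val]

theorem wordProd_cab (j : Fin n) (v : List (Gen n)) :
    wordProd K (.b j.succ :: .a j.succ :: .c j.succ :: v) =
      -wordProd K (.c j.castSucc :: .b j.castSucc :: .a j.castSucc :: v) := by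
  have h := abc_add_cab_eq_zero (K := K) (n := n) j
  refine eq_neg_of_add_eq_zero_right ?_
  simp only [wordProd, letter_a, letter_b, letter_c, mul_assoc, Fin.val_succ, Fin.val_castSucc,
    Nat.cast_add, Nat.cast_one] at h ⊢
  rw [← mul_add, h, mul_zero]

theorem HeadReducible.wordProd_eq_zero {w : List (Gen n)} (h : HeadReducible w)
    (hw : ∀ i v, w ≠ .b i :: .a i :: .c i :: v) : wordProd K w = 0 := by
  cases h with
  | ca_zero v =>
    rw [wordProd, wordProd, letter_a, letter_c, mul_assoc]
    exact (congrArg _ cB_zero_mul_aB_zero).trans (mul_zero _)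
  | bca i v =>
    simp only [wordProd, letter_a, letter_b, letter_c]
    rw [mul_assoc, mul_assoc, ← mul_assoc (bB K n _), bB_mul_cB_mul_aB, mul_zero]
  | ba j v =>
    have h := bB_mul_aB (K := K) (n := n) j
    simp [wordProd, letter_a, letter_b, mul_assoc, h]
  | cab i v => exact absurd rfl (hw i v)
  | abc_last v =>
    simp only [wordProd, letter_a, letter_b, letter_c, Fin.val_last]
    rw [mul_assoc, mul_assoc, ← mul_assoc (aB K n _), aB_mul_bB_mul_cB_last, mul_zero]
  | cc j v =>
    have h := cB_mul_cB (K := K) (n := n) j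
    simp [wordProd, letter_c, mul_assoc, h]

variable (K) in
/-- The element of `B` with given coordinates in the basis of normal words. -/
noncomputable def ofNormalForm : (NormalWord n →₀ K) →ₗ[K] B K n :=
  linearCombination K fun w => wordProd K w.1

theorem ofNormalForm_single (w : NormalWord n) :
    ofNormalForm K (single w 1) = wordProd K w.1 := by
  rw [ofNormalForm, linearCombination_single, one_smul]

theorem ofNormalForm_mulLetter {w : List (Gen n)} (hw : IsNormal w) (x : Gen n) :
    ofNormalForm K (mulLetter K w x) = wordProd K w * letter K x := by
  change _ = wordProd K (x :: w)
  by_cases hcab : ∃ i v, x = .b i ∧ w = .a i :: .c i :: v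
  · obtain ⟨i, v, rfl, rfl⟩ := hcab
    induction i using Fin.cases with
    | zero => exact absurd (HeadReducible.ca_zero v) hw.1
    | succ j =>
      have hv := (normal_c_b_a_castSucc_iff j v).2 ((normal_a_c_succ_iff j v).1 hw)
      rw [mulLetter_b_succ, map_neg, normalSingle_of_normal hv, ofNormalForm_single, wordProd_cab]
  · rw [mulLetter_eq_normalSingle K fun i v hx hv => hcab ⟨i, v, hx, hv⟩]
    by_cases hxw : IsNormal (x :: w)
    · rw [normalSingle_of_normal hxw, ofNormalForm_single]
    · have hred : HeadReducible (x :: w) := not_not.1 fun h => hxw ⟨h, hw⟩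
      rw [normalSingle_of_not_normal hxw, map_zero, hred.wordProd_eq_zero]
      rintro i v ⟨⟩
      exact hcab ⟨i, v, rfl, rfl⟩

theorem ofNormalForm_rightMul (x : Gen n) (f : NormalWord n →₀ K) :
    ofNormalForm K (rightMul K x f) = ofNormalForm K f * letter K x := by
  induction f using Finsupp.induction_linear with
  | zero => rw [map_zero, map_zero, zero_mul]
  | add f g hf hg => rw [map_add, map_add, map_add, hf, hg, add_mul]
  | single w r =>
    rw [rightMul, linearCombination_single, map_smul, ofNormalForm_mulLetter w.2, ofNormalForm,
      linearCombination_single, smul_mul_assoc]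

theorem ofNormalForm_freeAction (x : FA K n) (f : NormalWord n →₀ K) :
    ofNormalForm K (unop (freeAction K x) f) = ofNormalForm K f * πB K n x := by
  induction x using FreeAlgebra.induction generalizing f with
  | grade0 r =>
    rw [AlgHom.commutes, AlgHom.commutes, MulOpposite.algebraMap_apply, unop_op,
      Module.algebraMap_end_apply, map_smul, ← Algebra.commutes, Algebra.smul_def]
  | grade1 x =>
    rw [freeAction, FreeAlgebra.lift_ι_apply, unop_op, ofNormalForm_rightMul, letter]
  | mul x y hx hy =>
    rw [map_mul, unop_mul, Module.End.mul_apply, hy, hx, map_mul, mul_assoc]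
  | add x y hx hy =>
    rw [map_add, unop_add, LinearMap.add_apply, map_add, hx, hy, map_add, mul_add]

theorem ofNormalForm_normalForm (y : B K n) : ofNormalForm K (normalForm y) = y := by
  obtain ⟨x, rfl⟩ := RingQuot.mkAlgHom_surjective K (BRel K n) y
  change ofNormalForm K (unop (action K (πB K n x)) _) = πB K n x
  rw [action_πB, ofNormalForm_freeAction, ofNormalForm_single, wordProd, one_mul]

theorem mem_of_normalForm {I : Ideal (B K n)} {y : B K n}
    (h : ∀ w : NormalWord n, normalForm y w ≠ 0 → wordProd K w.1 ∈ I) : y ∈ I := by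
  rw [← ofNormalForm_normalForm y, ofNormalForm, linearCombination_apply]
  exact I.sum_mem fun w hw => I.smul_of_tower_mem _ (h w (Finsupp.mem_support_iff.1 hw))

open scoped Classical in
theorem normalSingle_apply (w : List (Gen n)) (u : NormalWord n) :
    normalSingle K w u = if w = u.1 then 1 else 0 := by
  by_cases hw : IsNormal w
  · rw [normalSingle_of_normal hw, single_apply]
    exact if_congr Subtype.ext_iff rfl rfl
  · rw [normalSingle_of_not_normal hw, Finsupp.zero_apply, if_neg]
    rintro rfl
    exact hw u.2

open scoped Classical in
theorem mulLetter_apply_cons (v : List (Gen n)) {x : Gen n} {w : List (Gen n)}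
    (h : IsNormal (x :: w)) : mulLetter K v x ⟨x :: w, h⟩ = if v = w then 1 else 0 := by
  by_cases hcab : ∃ i u, x = .b i ∧ v = .a i :: .c i :: u
  · obtain ⟨i, u, rfl, rfl⟩ := hcab
    rw [if_neg]
    · induction i using Fin.cases with
      | zero => simp [mulLetter]
      | succ j => simp [mulLetter_b_succ, normalSingle_apply]
    · rintro rfl
      exact h.1 (.cab i u)
  · rw [mulLetter_eq_normalSingle K fun i u hx hv => hcab ⟨i, u, hx, hv⟩, normalSingle_apply]
    simp only [List.cons.injEq, true_and]

theorem rightMul_apply_cons (x : Gen n) (f : NormalWord n →₀ K) {w : List (Gen n)}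
    (h : IsNormal (x :: w)) : rightMul K x f ⟨x :: w, h⟩ = f ⟨w, h.2⟩ := by
  classical
  induction f using Finsupp.induction_linear with
  | zero => rw [map_zero, Finsupp.zero_apply, Finsupp.zero_apply]
  | add f g hf hg => rw [map_add, Finsupp.add_apply, Finsupp.add_apply, hf, hg]
  | single v r =>
    rw [rightMul, linearCombination_single, Finsupp.smul_apply, mulLetter_apply_cons, single_apply,
      smul_eq_mul, mul_ite, mul_one, mul_zero]
    exact if_congr (Subtype.ext_iff (a2 := ⟨w, h.2⟩)).symm rfl rfl

theorem rightMul_c_apply_b (k i : Fin (n + 1)) (f : NormalWord n →₀ K) {w : List (Gen n)}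
    (h : IsNormal (.b i :: w)) : rightMul K (.c k) f ⟨.b i :: w, h⟩ = 0 := by
  induction f using Finsupp.induction_linear with
  | zero => rw [map_zero, Finsupp.zero_apply]
  | add f g hf hg => rw [map_add, Finsupp.add_apply, hf, hg, add_zero]
  | single v r => simp [rightMul, mulLetter, normalSingle_apply]

end NormalForm

section Annihilators

variable {K : Type} [Field K] {n : ℕ}

theorem normalForm_mul_letter_cons (y : B K n) {x : Gen n} {w : List (Gen n)}
    (h : IsNormal (x :: w)) : normalForm (y * letter K x) ⟨x :: w, h⟩ = normalForm y ⟨w, h.2⟩ := by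
  rw [normalForm_mul_letter, rightMul_apply_cons]

theorem headReducible_of_mul_letter_eq_zero {x : Gen n} {y : B K n} (hy : y * letter K x = 0)
    {w : NormalWord n} (hw : normalForm y w ≠ 0) : HeadReducible (x :: w.1) := by
  by_contra h
  rw [← normalForm_mul_letter_cons y ⟨h, w.2⟩, hy, normalForm_zero] at hw
  exact hw rfl

theorem exists_fin_val_eq {k : ℤ} (hk : 0 ≤ k) (hkn : k ≤ n) : ∃ i : Fin (n + 1), k = (i : ℕ) :=
  ⟨⟨k.toNat, by omega⟩, (Int.toNat_of_nonneg hk).symm⟩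

theorem exists_eq_mul_cB_of_mul_cB_eq_zero {k : ℤ} (hk : 0 ≤ k) (hkn : k < n) {x : B K n}
    (hx : x * cB K n k = 0) : ∃ z, x = z * cB K n (k - 1) := by
  obtain ⟨i, rfl⟩ := exists_fin_val_eq hk hkn.le
  suffices x ∈ Ideal.span {cB K n (((i : ℕ) : ℤ) - 1)} by
    simpa only [eq_comm] using Ideal.mem_span_singleton'.1 this
  refine mem_of_normalForm fun ⟨w, _⟩ hw => ?_
  rw [← letter_c] at hx
  cases headReducible_of_mul_letter_eq_zero hx hw with
  | abc_last v => simp at hkn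
  | cc j v =>
    rw [wordProd, letter_c]
    simpa using Ideal.mul_mem_left _ _ (Ideal.mem_span_singleton_self _)

theorem exists_eq_mul_cB_mul_aB_of_mul_bB_add_mul_cB_eq_zero {i k : ℤ} (hi : 0 ≤ i) (hin : i ≤ n)
    (hk : 0 ≤ k) (hkn : k ≤ n) {x y : B K n} (h : x * bB K n i + y * cB K n k = 0) :
    ∃ z, x = z * (cB K n i * aB K n i) := by
  obtain ⟨i, rfl⟩ := exists_fin_val_eq hi hin
  obtain ⟨k, rfl⟩ := exists_fin_val_eq hk hkn
  suffices x ∈ Ideal.span {cB K n (i : ℕ) * aB K n (i : ℕ)} by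
    simpa only [eq_comm] using Ideal.mem_span_singleton'.1 this
  refine mem_of_normalForm fun ⟨w, hwn⟩ hw => ?_
  have hred : HeadReducible (.b i :: w) := by
    by_contra hb
    have hbw : IsNormal (.b i :: w) := ⟨hb, hwn⟩
    rw [← letter_b, ← letter_c] at h
    have hcoeff := DFunLike.congr_fun (congrArg normalForm h) ⟨.b i :: w, hbw⟩
    rw [normalForm_add, Finsupp.add_apply, normalForm_mul_letter_cons, normalForm_mul_letter,
      rightMul_c_apply_b, add_zero, normalForm_zero] at hcoeff
    exact hw hcoeff
  cases hred with
  | cab _ v =>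
    rw [wordProd, wordProd, letter_a, letter_c, mul_assoc]
    exact Ideal.mul_mem_left _ _ (Ideal.mem_span_singleton_self _)

theorem exists_eq_mul_bB_add_mul_cB_of_mul_cB_mul_aB_eq_zero {i : ℤ} (hi : 1 ≤ i) (hin : i ≤ n)
    {x : B K n} (hx : x * (cB K n i * aB K n i) = 0) :
    ∃ y z, x = y * bB K n i + z * cB K n (i - 1) := by
  obtain ⟨i, rfl⟩ := exists_fin_val_eq (by omega) hin
  suffices x ∈ Ideal.span {bB K n (i : ℕ), cB K n (((i : ℕ) : ℤ) - 1)} by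
    simpa only [eq_comm] using Ideal.mem_span_pair.1 this
  refine mem_of_normalForm fun ⟨w, hwn⟩ hw => ?_
  have mem_b (v : List (Gen n)) : wordProd K (.b i :: v) ∈
      Ideal.span {bB K n (i : ℕ), cB K n (((i : ℕ) : ℤ) - 1)} := by
    rw [wordProd, letter_b]
    exact Ideal.mul_mem_left _ _ (Ideal.subset_span (by simp))
  rw [← letter_c, ← letter_a, ← mul_assoc] at hx
  by_cases hc : HeadReducible (.c i :: w)
  · cases hc with
    | abc_last v => exact mem_b _
    | cc j v =>
      rw [wordProd, letter_c]
      exact Ideal.mul_mem_left _ _ (Ideal.subset_span (by simp))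
  · rw [← normalForm_mul_letter_cons x ⟨hc, hwn⟩] at hw
    cases headReducible_of_mul_letter_eq_zero hx hw with
    | ca_zero v => simp at hi
    | bca _ v => exact mem_b _

end Annihilators

section Resolution

variable (K : Type) [Field K] (n i : ℕ)

/-- The raising coefficients of the zigzag resolving `B b_i + B c_{i-1}`:
`b_i, a_{i-1} b_{i-1}, a_{i-2} b_{i-2}, …`. -/
def raising : ℕ → B K n
  | 0 => bB K n i
  | t + 1 => aB K n (i - (t + 1 : ℕ)) * bB K n (i - (t + 1 : ℕ))

/-- The lowering coefficients of the zigzag resolving `B b_i + B c_{i-1}`: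
`c_i a_i, c_{i-1}, c_{i-2}, …`. -/
def lowering : ℕ → B K n
  | 0 => cB K n i * aB K n i
  | t + 1 => cB K n (i - (t + 1 : ℕ))

theorem zigzagRelations : ZigzagRelations (raising K n i) (lowering K n i) := by
  have pred_add_one (t : ℕ) : (i : ℤ) - (t + 1 : ℕ) + 1 = i - t := by push_cast; ring
  have hba (t : ℕ) := bB_mul_aB (K := K) (n := n) (i - (t + 1 : ℕ))
  have hcc (t : ℕ) := cB_mul_cB (K := K) (n := n) (i - (t + 1 : ℕ))
  have habc (t : ℕ) := abc_add_cab_eq_zero (K := K) (n := n) (i - (t + 1 : ℕ))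
  simp only [pred_add_one] at hba hcc habc
  refine ⟨fun t => ?_, fun t => ?_, ?_, fun t => ?_⟩
  · have h := hba t
    cases t with
    | zero => rw [Nat.cast_zero, sub_zero] at h; rw [raising, raising, ← mul_assoc, h, zero_mul]
    | succ t => rw [raising, raising, mul_assoc, ← mul_assoc (bB K n _), h, zero_mul, mul_zero]
  · have h := hcc t
    cases t with
    | zero => rw [Nat.cast_zero, sub_zero] at h; rw [lowering, lowering, ← mul_assoc, h, zero_mul]
    | succ t => rw [lowering, lowering, h]
  · rw [raising, lowering, ← mul_assoc, bB_mul_cB_mul_aB]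
  · have h := habc t
    cases t with
    | zero =>
      rw [Nat.cast_zero, sub_zero] at h
      rw [raising, raising, lowering, lowering, add_comm, h]
    | succ t => rw [raising, raising, lowering, lowering, add_comm, ← mul_assoc (cB K n _), h]

variable {n i}

theorem zigzagExact (hi : 1 ≤ i) (hin : i ≤ n) :
    ZigzagExact (raising K n i) (lowering K n i) i where
  of_raise_zero_add h := exists_eq_mul_cB_mul_aB_of_mul_bB_add_mul_cB_eq_zero (k := (i : ℤ) - 1)
    (by omega) (by omega) (by omega) (by omega) h
  of_lower_zero h := exists_eq_mul_bB_add_mul_cB_of_mul_cB_mul_aB_eq_zero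
    (by omega) (by omega) h
  of_lower_succ {x t} ht h := by
    obtain ⟨z, rfl⟩ := exists_eq_mul_cB_of_mul_cB_eq_zero (by omega) (by omega) h
    exact ⟨z, by rw [lowering]; congr 2; push_cast; ring⟩

theorem GammaMat_cols (k : ℤ) : (GammaMat K n k).cols = 1 := by
  unfold GammaMat
  split_ifs <;> rfl

theorem GammaMat_rows (k : ℤ) : (GammaMat K n k).rows = if k = 0 then 1 else 2 := by
  unfold GammaMat
  split_ifs <;> rfl

theorem GammaMat_represents {t : ℕ} (ht : 1 ≤ t) (hti : t ≤ i) :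
    (GammaMat K n (i - t)).Represents (zigzag (raising K n i) (lowering K n i))
      (fun r => t + 2 * r) (fun c => t + 1 + 2 * c) := by
  obtain ⟨t, rfl⟩ := Nat.exists_eq_add_of_le' ht
  have hlower : cB K n (i - (t + 1 : ℕ) - 1) = lowering K n i (t + 2) := by
    rw [lowering]; congr 1; push_cast; ring
  unfold GammaMat
  split_ifs with hzero
  · have hvanish : lowering K n i (t + 2) = 0 := by
      rw [← hlower, cB_eq_zero (by omega)]
    intro V c
    obtain rfl := Subsingleton.elim c 0
    simp [Matrix.vecMul, dotProduct, zigzag, raising, hvanish, ← hzero]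
  · intro V c
    obtain rfl := Subsingleton.elim c 0
    simp [Matrix.vecMul, dotProduct, zigzag, raising, GammaP, ← hlower, Fin.sum_univ_two]

theorem isZigzagTruncation_cB_mul_aB :
    IsZigzagTruncation (raising K n i) (lowering K n i) i
      ⟨1, 1, !![cB K n i * aB K n i]⟩ 0 where
  cols := rfl
  rows := by simp [nextDegree]
  represents V c := by
    obtain rfl := Subsingleton.elim c 0
    simp [Matrix.vecMul, dotProduct, zigzag, lowering]

theorem isZigzagTruncation_bB_cB (hi : 1 ≤ i) :
    IsZigzagTruncation (raising K n i) (lowering K n i) i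
      ⟨2, 1, !![bB K n i; cB K n ((i : ℤ) - 1)]⟩ 1 where
  cols := rfl
  rows := by simp [nextDegree, hi]
  represents V c := by
    obtain rfl := Subsingleton.elim c 0
    simp [Matrix.vecMul, dotProduct, zigzag, lowering, raising, Fin.sum_univ_two]

theorem isZigzagTruncation_foldl_starGamma {P : MatB (B K n)} {N k : ℕ}
    (hP : IsZigzagTruncation (raising K n i) (lowering K n i) i P N) (hk : N + 2 * k ≤ i + 1) :
    IsZigzagTruncation (raising K n i) (lowering K n i) i
      (((List.range k).map fun t : ℕ => (i : ℤ) - (N + 1 + 2 * t : ℕ)).foldl (starGamma K n) P)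
      (N + 2 * k) := by
  induction k with
  | zero => exact hP
  | succ k ih =>
    rw [List.range_succ, List.map_append, List.foldl_append, List.map_singleton, List.foldl_cons,
      List.foldl_nil, starGamma, if_neg (by omega)]
    have hgamma :=
      GammaMat_represents (n := n) (i := i) K (t := N + 1 + 2 * k) (by omega) (by omega)
    refine (ih (by omega)).star (by omega) (GammaMat_cols K _) ?_ ?_
    · rw [GammaMat_rows]
      exact if_congr (by omega) rfl rfl
    · convert hgamma using 2 <;> omega

theorem isZigzagTruncation_Smat {p : ℕ} (hi : 1 ≤ i) (hp : 1 ≤ p) :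
    IsZigzagTruncation (raising K n i) (lowering K n i) i (Smat K n i p)
      (0 + 2 * ((i - p) / 2 + 1)) := by
  convert isZigzagTruncation_foldl_starGamma K (k := (i - p) / 2 + 1)
    (isZigzagTruncation_cB_mul_aB (i := i) (n := n) K) (by omega) using 1
  rw [Smat]
  congr 1
  -- `Smat` maps over `List.range` coerced to `List ℤ`, which elaborates to a monadic `bind`.
  simp [List.map_eq_flatMap, List.flatMap_assoc, sub_sub]

theorem isZigzagTruncation_Tmat {p : ℕ} (hi : 1 ≤ i) :
    IsZigzagTruncation (raising K n i) (lowering K n i) i (Tmat K n i p)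
      (1 + 2 * ((i - p) / 2)) := by
  convert isZigzagTruncation_foldl_starGamma K (k := (i - p) / 2)
    (isZigzagTruncation_bB_cB K hi) (by omega) using 1
  rw [Tmat]
  congr 1
  simp [List.map_eq_flatMap, List.flatMap_assoc, mul_add, add_comm]

/-- The degree of which the `j`-th differential is the truncation: it increases up to `i + 1` and
then alternates between `i` and `i + 1`. -/
def topDegree (i j : ℕ) : ℕ := if j < i then j + 2 else i + (i + j) % 2

theorem topDegree_succ (i j : ℕ) : topDegree i (j + 1) = nextDegree i (topDegree i j) := by
  unfold topDegree nextDegree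
  split_ifs <;> omega

theorem topDegree_le (i j : ℕ) : topDegree i j ≤ i + 1 := by
  unfold topDegree
  split_ifs <;> omega

theorem isZigzagTruncation_DQ (hi : 1 ≤ i) (j : ℕ) :
    IsZigzagTruncation (raising K n i) (lowering K n i) i (DQ K n i j) (topDegree i j) := by
  unfold DQ topDegree
  split_ifs
  · convert isZigzagTruncation_Smat K hi (p := i - j) (by omega) using 1
    omega
  · convert isZigzagTruncation_Tmat K hi (p := i - j - 1) using 1
    omega
  · convert isZigzagTruncation_Smat K hi (p := 2 - i % 2) (by omega) using 1
    omega
  · convert isZigzagTruncation_Tmat K hi (p := i % 2) using 1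
    omega

variable {K}

theorem DQ_cols_succ (hi : 1 ≤ i) (j : ℕ) : (DQ K n i (j + 1)).cols = (DQ K n i j).rows := by
  rw [(isZigzagTruncation_DQ K hi (j + 1)).cols, (isZigzagTruncation_DQ K hi j).rows,
    topDegree_succ]

theorem augmentation_eq_zero_iff (hi : 1 ≤ i) (hin : i ≤ n) (h : (DQ K n i 0).cols = 2)
    (w x : B K n) :
    w * bB K n i + x * cB K n ((i : ℤ) - 1) = 0 ↔
      ∃ u : Fin (DQ K n i 0).rows → B K n,
        w = Matrix.vecMul u (DQ K n i 0).M (Fin.cast h.symm 0) ∧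
        x = Matrix.vecMul u (DQ K n i 0).M (Fin.cast h.symm 1) := by
  have hdegree : topDegree i 0 = nextDegree i 1 := by
    rw [topDegree, nextDegree, if_pos (by omega), if_pos hi]
  have hexact := (isZigzagTruncation_bB_cB K hi).vecMul_eq_zero_iff (zigzagRelations K n i)
    (zigzagExact K hi hin) hi le_rfl (by omega) (hdegree ▸ isZigzagTruncation_DQ K hi 0) h
    (![w, x] ∘ Fin.cast h)
  convert hexact using 1
  · simp [funext_iff, Matrix.vecHead, Matrix.vecTail]
  · simp only [funext_iff, ← (finCongr h.symm).forall_congr_right, Fin.forall_fin_two]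
    simp

end Resolution

/-- Lemma 3.7.  For `1 ≤ i ≤ n`, the eventually periodic complex
`⋯ → F₃ → F₂ → F₁ = B² → B b_i + B c_{i−1} → 0` with augmentation
`(w,x) ↦ w b_i + x c_{i−1}` and differentials `S_{i,i−1}, T_{i,i−2}, S_{i,i−3}, …`
(eventually `2`-periodic as in `DQ`) is a free resolution of the left ideal
`B b_i + B c_{i−1}`. -/
theorem stmt_14 (K : Type) [Field K] (n : ℕ) (i : ℕ) (h1 : 1 ≤ i) (h2 : i ≤ n) :
    -- the complex is well formed: consecutive matrices are composable, and `F₁ = B²`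
    (∀ j, (DQ K n i (j+1)).cols = (DQ K n i j).rows) ∧
    (DQ K n i 0).cols = 2 ∧
    -- the augmentation maps onto `B b_i + B c_{i−1}`
    (∀ y, y ∈ Ideal.span {bB K n i} + Ideal.span {cB K n ((i : ℤ) - 1)} ↔
      ∃ w x : B K n, y = w * bB K n i + x * cB K n ((i : ℤ) - 1)) ∧
    -- exactness at `F₁ = B²`: ker(augmentation) = im(first differential)
    (∀ h : (DQ K n i 0).cols = 2, ∀ w x : B K n,
      (w * bB K n i + x * cB K n ((i : ℤ) - 1)) = 0 ↔
      ∃ u : Fin (DQ K n i 0).rows → B K n,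
        w = Matrix.vecMul u (DQ K n i 0).M (Fin.cast h.symm 0) ∧
        x = Matrix.vecMul u (DQ K n i 0).M (Fin.cast h.symm 1)) ∧
    -- exactness at `F_{j+2}`: ker of the `(j+1)`-st differential = im of the `(j+2)`-nd
    (∀ j (h : (DQ K n i (j+1)).cols = (DQ K n i j).rows)
        (v : Fin (DQ K n i (j+1)).cols → B K n),
      Matrix.vecMul (v ∘ Fin.cast h.symm) (DQ K n i j).M = 0 ↔
      ∃ w : Fin (DQ K n i (j+1)).rows → B K n, v = Matrix.vecMul w (DQ K n i (j+1)).M) := by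
  have hrel := zigzagRelations K n i
  have hexact := zigzagExact K h1 h2
  have hcols : (DQ K n i 0).cols = 2 := by
    rw [(isZigzagTruncation_DQ K h1 0).cols, topDegree, if_pos (by omega)]
  refine ⟨DQ_cols_succ h1, hcols, fun y => ?_, augmentation_eq_zero_iff h1 h2, fun j h v => ?_⟩
  · rw [Submodule.add_eq_sup, ← Ideal.span_insert, Ideal.mem_span_pair]
    simp only [eq_comm]
  · have hone : 1 ≤ topDegree i j := by unfold topDegree; split_ifs <;> omega
    exact (isZigzagTruncation_DQ K h1 j).vecMul_eq_zero_iff hrel hexact h1 hone (topDegree_le i j)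
      (topDegree_succ i j ▸ isZigzagTruncation_DQ K h1 (j + 1)) h v
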